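/- Let N ≥ 1 and k ≥ 1, and let 𝒬 = (q_1, …, q_{N^k}) be a tuple of vectors in Δ_N with associated matrices Q_i and k-th order transition matrix Q^(k). Then M^k_{k-1} B^k_k(𝒬) = Σ_{i=1}^{N^{k-1}} E_{N^{k-1},i} ⊗ Q_i, and this matrix equals C_{N,N^{k-1}}^{-1} Q^(k). -/

import Mathlib

open Matrix BigOperators Filter Topology

noncomputable section

/-- Cast a `Fin`-indexed matrix along equalities of the dimensions. -/
def castM {a b a' b' : ℕ} (ha : a = a') (hb : b = b') (A : Matrix (Fin a) (Fin b) ℝ) :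
    Matrix (Fin a') (Fin b') ℝ :=
  Matrix.reindex (finCongr ha) (finCongr hb) A

/-- Kronecker product (row-major convention) of `Fin`-indexed real matrices. -/
def kron {a b c d : ℕ} (A : Matrix (Fin a) (Fin b) ℝ) (B : Matrix (Fin c) (Fin d) ℝ) :
    Matrix (Fin (a * c)) (Fin (b * d)) ℝ :=
  Matrix.of fun i j => A i.divNat j.divNat * B i.modNat j.modNat

/-- Standard basis column vector `e_{n,i}` (as an `n × 1` matrix). -/
def eCol (n : ℕ) (i : Fin n) : Matrix (Fin n) (Fin 1) ℝ :=
  Matrix.of fun r _ => if r = i then (1 : ℝ) else 0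

/-- Standard basis row vector `e_{n,i}ᵀ` (as a `1 × n` matrix). -/
def eRow (n : ℕ) (i : Fin n) : Matrix (Fin 1) (Fin n) ℝ :=
  Matrix.of fun _ c => if c = i then (1 : ℝ) else 0

/-- `E_{n,i} = e_{n,i} e_{n,i}ᵀ`. -/
def EE (n : ℕ) (i : Fin n) : Matrix (Fin n) (Fin n) ℝ :=
  Matrix.of fun r c => if r = i ∧ c = i then (1 : ℝ) else 0

/-- All-ones row vector `1_nᵀ` (as a `1 × n` matrix). -/
def onesRow (n : ℕ) : Matrix (Fin 1) (Fin n) ℝ := Matrix.of fun _ _ => (1 : ℝ)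

/-- A column vector (an `n × 1` matrix) is a simplex vector: nonnegative entries summing to 1. -/
def IsSimplex {n : ℕ} (v : Matrix (Fin n) (Fin 1) ℝ) : Prop :=
  (∀ i, 0 ≤ v i 0) ∧ ∑ i, v i 0 = 1

/-- A matrix is column-stochastic: each column is a simplex vector. -/
def IsColStochastic {a b : ℕ} (A : Matrix (Fin a) (Fin b) ℝ) : Prop :=
  ∀ j, (∀ i, 0 ≤ A i j) ∧ ∑ i, A i j = 1

/-- The (0-based) index `b * i + j` corresponding to the 1-based index `b(i-1)+j`. -/
def pairIdx {a b : ℕ} (i : Fin a) (j : Fin b) : Fin (a * b) :=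
  ⟨b * i.val + j.val, by
    have h : b * (i.val + 1) ≤ b * a := Nat.mul_le_mul le_rfl i.isLt
    have h2 : b * (i.val + 1) = b * i.val + b := by ring
    have h3 : b * a = a * b := Nat.mul_comm b a
    have h4 : j.val < b := j.isLt
    omega⟩

/-- Commutation matrix `C_{n,m} = ∑_i e_{m,i}ᵀ ⊗ E_n ⊗ e_{m,i}`. -/
def commMat (n m : ℕ) : Matrix (Fin (n * m)) (Fin (n * m)) ℝ :=
  ∑ i : Fin m,
    castM (by ring) (by ring)
      (kron (kron (eRow m i) (1 : Matrix (Fin n) (Fin n) ℝ)) (eCol m i))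

/-- Marginalization matrix `M^k_m = E_{N^m} ⊗ 1_Nᵀ ⊗ E_{N^{k-m}}`. -/
def Marg (N k m : ℕ) (hm : m ≤ k) : Matrix (Fin (N ^ k)) (Fin (N ^ (k + 1))) ℝ :=
  castM (by rw [mul_one, ← pow_add]; exact congrArg (N ^ ·) (by omega))
    (by rw [← pow_succ, ← pow_add]; exact congrArg (N ^ ·) (by omega))
    (kron (kron (1 : Matrix (Fin (N ^ m)) (Fin (N ^ m)) ℝ) (onesRow N))
      (1 : Matrix (Fin (N ^ (k - m))) (Fin (N ^ (k - m))) ℝ))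

/-- Branching matrix `B^k_m(𝒬) = ∑_{i,j} E_{N^m,i} ⊗ q_{N^{k-m}(i-1)+j} ⊗ E_{N^{k-m},j}`. -/
def Branch (N k m : ℕ) (hm : m ≤ k) (q : Fin (N ^ k) → Matrix (Fin N) (Fin 1) ℝ) :
    Matrix (Fin (N ^ (k + 1))) (Fin (N ^ k)) ℝ :=
  castM (by rw [← pow_succ, ← pow_add]; exact congrArg (N ^ ·) (by omega))
    (by rw [mul_one, ← pow_add]; exact congrArg (N ^ ·) (by omega))
    (∑ i : Fin (N ^ m), ∑ j : Fin (N ^ (k - m)),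
      kron (kron (EE (N ^ m) i)
          (q (finCongr (by rw [← pow_add]; exact congrArg (N ^ ·) (by omega)) (pairIdx i j))))
        (EE (N ^ (k - m)) j))

/-- Cycling matrix `C^k_m = C_{N^m, N^{k-m}}`. -/
def Cyc (N k m : ℕ) (hm : m ≤ k) : Matrix (Fin (N ^ k)) (Fin (N ^ k)) ℝ :=
  castM (by rw [← pow_add]; exact congrArg (N ^ ·) (by omega))
    (by rw [← pow_add]; exact congrArg (N ^ ·) (by omega))
    (commMat (N ^ m) (N ^ (k - m)))

/-- The block `Q_i` of a tuple `𝒬`: the `N × N` matrix with columns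
`q_{N(i-1)+1}, …, q_{N(i-1)+N}`. -/
def Qblk (N k : ℕ) (hk : 1 ≤ k) (q : Fin (N ^ k) → Matrix (Fin N) (Fin 1) ℝ)
    (i : Fin (N ^ (k - 1))) : Matrix (Fin N) (Fin N) ℝ :=
  Matrix.of fun r c =>
    q (finCongr (by rw [← pow_succ]; exact congrArg (N ^ ·) (by omega)) (pairIdx i c)) r 0

/-- The k-th order transition matrix `Q^(k) = C_{N,N^{k-1}} ∑_i E_{N^{k-1},i} ⊗ Q_i`. -/
def TransMat (N k : ℕ) (hk : 1 ≤ k) (q : Fin (N ^ k) → Matrix (Fin N) (Fin 1) ℝ) :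
    Matrix (Fin (N ^ k)) (Fin (N ^ k)) ℝ :=
  castM (by rw [← pow_succ']; exact congrArg (N ^ ·) (by omega))
      (by rw [← pow_succ']; exact congrArg (N ^ ·) (by omega)) (commMat N (N ^ (k - 1))) *
    ∑ i : Fin (N ^ (k - 1)),
      castM (by rw [← pow_succ]; exact congrArg (N ^ ·) (by omega))
        (by rw [← pow_succ]; exact congrArg (N ^ ·) (by omega))
        (kron (EE (N ^ (k - 1)) i) (Qblk N k hk q i))

/-- `MChain N m n = M^m_m M^{m+1}_{m+1} ⋯ M^{m+n}_{m+n}`. -/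
def MChain (N m : ℕ) : (n : ℕ) → Matrix (Fin (N ^ m)) (Fin (N ^ (m + n + 1))) ℝ
  | 0 => Marg N m m le_rfl
  | n + 1 => MChain N m n * Marg N (m + n + 1) (m + n + 1) le_rfl

/-- `BChain N Q m n = B^{m+n}_{m+n}(𝒬^{(m+n)}) ⋯ B^m_m(𝒬^{(m)})`. -/
def BChain (N : ℕ) (Q : (j : ℕ) → Fin (N ^ j) → Matrix (Fin N) (Fin 1) ℝ) (m : ℕ) :
    (n : ℕ) → Matrix (Fin (N ^ (m + n + 1))) (Fin (N ^ m)) ℝ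
  | 0 => Branch N m m le_rfl (Q m)
  | n + 1 => Branch N (m + n + 1) (m + n + 1) le_rfl (Q (m + n + 1)) * BChain N Q m n

/-- The k‑shift matrix `S(𝒬^(m), …, 𝒬^(k))` with `k = m + n`:
`M^m_m ⋯ M^k_k C^{k+1}_1 B^k_k(𝒬^(k)) ⋯ B^m_m(𝒬^(m))`. -/
def Shift (N m n : ℕ) (Q : (j : ℕ) → Fin (N ^ j) → Matrix (Fin N) (Fin 1) ℝ) :
    Matrix (Fin (N ^ m)) (Fin (N ^ m)) ℝ :=
  MChain N m n * Cyc N (m + n + 1) 1 (by omega) * BChain N Q m n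

/-- ℓ¹ norm of a column vector. -/
def l1 {n : ℕ} (v : Matrix (Fin n) (Fin 1) ℝ) : ℝ := ∑ i, |v i 0|

/-!
Split an index of `Fin (N ^ k)` as `(i, j)` with `i : Fin (N ^ (k - 1))` and `j : Fin N`, so that
`E_{N^k,(i,j)} = E_{N^{k-1},i} ⊗ E_{N,j}`. Then `M^k_{k-1} = E ⊗ 1ᵀ ⊗ E` acts on each summand
`E_i ⊗ E_j ⊗ q_{(i,j)}` of `B^k_k` factor by factor and, as `1ᵀ E_j = e_jᵀ`, turns it into
`E_i ⊗ e_jᵀ ⊗ q_{(i,j)}`; summing over `j` assembles the columns `q_{(i,j)}` into `Q_i`. The same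
factorwise multiplication shows `C Cᵀ = 1` for the commutation matrix, so it cancels from `Q^(k)`.
-/

section Cast

variable {a b c d a' b' c' d' a'' b'' : ℕ}

lemma castM_castM (ha : a = a') (hb : b = b') (ha' : a' = a'') (hb' : b' = b'')
    (A : Matrix (Fin a) (Fin b) ℝ) :
    castM ha' hb' (castM ha hb A) = castM (ha.trans ha') (hb.trans hb') A :=
  rfl

lemma transpose_castM (ha : a = a') (hb : b = b') (A : Matrix (Fin a) (Fin b) ℝ) :
    (castM ha hb A)ᵀ = castM hb ha Aᵀ :=
  rfl

lemma castM_one (h : a = a') : castM h h (1 : Matrix (Fin a) (Fin a) ℝ) = 1 :=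
  submatrix_one_equiv _

lemma castM_mul_castM (ha : a = a') (hb : b = b') (hc : c = c')
    (A : Matrix (Fin a) (Fin b) ℝ) (B : Matrix (Fin b) (Fin c) ℝ) :
    castM ha hb A * castM hb hc B = castM ha hc (A * B) :=
  submatrix_mul_equiv A B _ _ _

lemma castM_sum {ι : Type*} (s : Finset ι) (ha : a = a') (hb : b = b')
    (A : ι → Matrix (Fin a) (Fin b) ℝ) :
    castM ha hb (∑ i ∈ s, A i) = ∑ i ∈ s, castM ha hb (A i) := by
  subst ha hb
  rfl

lemma isUnit_castM_iff (h h' : a = a') {A : Matrix (Fin a) (Fin a) ℝ} :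
    IsUnit (castM h h' A) ↔ IsUnit A :=
  isUnit_submatrix_equiv _ _

lemma EE_finCongr (h : a = a') (i : Fin a) : EE a' (finCongr h i) = castM h h (EE a i) := by
  subst h
  rfl

lemma castM_kron (ha : a = a') (hb : b = b') (A : Matrix (Fin a) (Fin b) ℝ)
    (B : Matrix (Fin c) (Fin d) ℝ) :
    kron (castM ha hb A) B = castM (congrArg (· * c) ha) (congrArg (· * d) hb) (kron A B) := by
  subst ha hb
  rfl

lemma kron_castM (hc : c = c') (hd : d = d') (A : Matrix (Fin a) (Fin b) ℝ)
    (B : Matrix (Fin c) (Fin d) ℝ) :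
    kron A (castM hc hd B) = castM (congrArg (a * ·) hc) (congrArg (b * ·) hd) (kron A B) := by
  subst hc hd
  rfl

end Cast

section Kronecker

variable {a b c d e f : ℕ}

lemma kron_eq_reindex (A : Matrix (Fin a) (Fin b) ℝ) (B : Matrix (Fin c) (Fin d) ℝ) :
    kron A B = reindex finProdFinEquiv finProdFinEquiv (kroneckerMap (· * ·) A B) :=
  rfl

lemma transpose_kron (A : Matrix (Fin a) (Fin b) ℝ) (B : Matrix (Fin c) (Fin d) ℝ) :
    (kron A B)ᵀ = kron Aᵀ Bᵀ :=
  rfl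

lemma kron_one_one : kron (1 : Matrix (Fin a) (Fin a) ℝ) (1 : Matrix (Fin b) (Fin b) ℝ) = 1 := by
  rw [kron_eq_reindex, one_kronecker_one, reindex_apply, submatrix_one_equiv]

lemma kron_mul_kron (A : Matrix (Fin a) (Fin b) ℝ) (B : Matrix (Fin b) (Fin c) ℝ)
    (A' : Matrix (Fin d) (Fin e) ℝ) (B' : Matrix (Fin e) (Fin f) ℝ) :
    kron A A' * kron B B' = kron (A * B) (A' * B') := by
  simp only [kron_eq_reindex, mul_kronecker_mul, reindex_apply, submatrix_mul_equiv]

lemma kron_sum {ι : Type*} (s : Finset ι) (A : Matrix (Fin a) (Fin b) ℝ)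
    (B : ι → Matrix (Fin c) (Fin d) ℝ) :
    kron A (∑ i ∈ s, B i) = ∑ i ∈ s, kron A (B i) := by
  ext
  simp only [kron, of_apply, Matrix.sum_apply, Finset.mul_sum]

lemma zero_kron (B : Matrix (Fin c) (Fin d) ℝ) :
    kron (0 : Matrix (Fin a) (Fin b) ℝ) B = 0 := by
  ext
  simp [kron]

end Kronecker

section StandardBasis

lemma pairIdx_eq_finProdFinEquiv {m n : ℕ} (i : Fin m) (j : Fin n) :
    pairIdx i j = finProdFinEquiv (i, j) :=
  Fin.ext (Nat.add_comm _ _)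

lemma sum_finCongr_pairIdx {M : Type*} [AddCommMonoid M] {m n d : ℕ} (h : m * n = d)
    (f : Fin d → M) : ∑ i, f i = ∑ i : Fin m, ∑ j : Fin n, f (finCongr h (pairIdx i j)) := by
  simp only [pairIdx_eq_finProdFinEquiv]
  rw [← Fintype.sum_prod_type', ← (finProdFinEquiv.trans (finCongr h)).sum_comp]
  rfl

lemma EE_pairIdx {m n : ℕ} (i : Fin m) (j : Fin n) :
    EE (m * n) (pairIdx i j) = kron (EE m i) (EE n j) := by
  have eq_pairIdx_iff (x : Fin (m * n)) : x = pairIdx i j ↔ x.divNat = i ∧ x.modNat = j := by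
    rw [pairIdx_eq_finProdFinEquiv, ← Equiv.symm_apply_eq, Prod.ext_iff]
    rfl
  ext r c
  simp only [EE, kron, of_apply, eq_pairIdx_iff, ite_and]
  grind

lemma sum_EE (n : ℕ) : ∑ i, EE n i = 1 := by
  ext r c
  simp [EE, Matrix.sum_apply, one_apply, ite_and, eq_comm]

lemma eRow_mul_transpose_eRow {n : ℕ} (i j : Fin n) :
    eRow n i * (eRow n j)ᵀ = if i = j then 1 else 0 := by
  ext r c
  obtain rfl := Subsingleton.elim r c
  simp [eRow, mul_apply, apply_ite (fun A : Matrix (Fin 1) (Fin 1) ℝ => A r r), eq_comm]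

lemma eCol_mul_transpose_eCol {n : ℕ} (i : Fin n) : eCol n i * (eCol n i)ᵀ = EE n i := by
  ext r c
  simp [eCol, EE, mul_apply, ← ite_and, and_comm]

lemma onesRow_mul_EE {n : ℕ} (i : Fin n) : onesRow n * EE n i = eRow n i := by
  ext r c
  simp [onesRow, EE, eRow, mul_apply, ite_and]

lemma kron_EE_of_eq_one {a b n : ℕ} (hn : n = 1) (A : Matrix (Fin a) (Fin b) ℝ) (j : Fin n) :
    kron A (EE n j) = castM (by rw [hn, mul_one]) (by rw [hn, mul_one]) A := by
  subst hn
  ext r c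
  simp [kron, EE, castM, Fin.divNat, Fin.cast, Subsingleton.elim _ j]

lemma finCongr_pairIdx_of_eq_one {m n : ℕ} (hn : n = 1) (h : m * n = m) (i : Fin m) (j : Fin n) :
    finCongr h (pairIdx i j) = i := by
  subst hn
  ext
  simp [pairIdx]

lemma sum_EE_kron_of_mul_eq {n m d p : ℕ} (h : n * m = d)
    (q : Fin d → Matrix (Fin p) (Fin 1) ℝ) :
    ∑ i, kron (EE d i) (q i) =
      castM (congrArg (· * p) h) (congrArg (· * 1) h)
        (∑ i : Fin n, ∑ j : Fin m,
          kron (kron (EE n i) (EE m j)) (q (finCongr h (pairIdx i j)))) := by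
  simp only [sum_finCongr_pairIdx h, EE_finCongr, castM_kron, EE_pairIdx, castM_sum]

lemma sum_kron_kron_eRow {a b m p : ℕ} (A : Matrix (Fin a) (Fin b) ℝ)
    (v : Fin m → Matrix (Fin p) (Fin 1) ℝ) :
    ∑ j, kron (kron A (eRow m j)) (v j) =
      castM (by rw [mul_one]) (by rw [mul_one]) (kron A (of fun r c => v c r 0)) := by
  ext r c
  simp [kron, castM, eRow, Matrix.sum_apply, Fin.divNat, Fin.modNat,
    Subsingleton.elim _ (0 : Fin 1)]

lemma kron_one_onesRow_one_mul_sum {n m p : ℕ} (v : Fin n → Fin m → Matrix (Fin p) (Fin 1) ℝ) :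
    kron (kron (1 : Matrix (Fin n) (Fin n) ℝ) (onesRow m)) (1 : Matrix (Fin p) (Fin p) ℝ) *
        ∑ i, ∑ j, kron (kron (EE n i) (EE m j)) (v i j) =
      castM (by rw [mul_one]) (by rw [mul_one])
        (∑ i, kron (EE n i) (of fun r c => v i c r 0)) := by
  simp only [Matrix.mul_sum, kron_mul_kron, Matrix.one_mul, onesRow_mul_EE,
    sum_kron_kron_eRow, castM_sum]

end StandardBasis

lemma commMat_mul_transpose (n m : ℕ) : commMat n m * (commMat n m)ᵀ = 1 := by
  have term_mul (i j : Fin m) :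
      kron (kron (eRow m i) (1 : Matrix (Fin n) (Fin n) ℝ)) (eCol m i) *
          (kron (kron (eRow m j) (1 : Matrix (Fin n) (Fin n) ℝ)) (eCol m j))ᵀ =
        if i = j then kron 1 (EE m i) else 0 := by
    simp only [transpose_kron, kron_mul_kron, transpose_one, mul_one, eRow_mul_transpose_eRow]
    split_ifs with h
    · rw [kron_one_one, ← h, eCol_mul_transpose_eCol]
    · rw [zero_kron, zero_kron]
  simp only [commMat, ← castM_sum, transpose_castM, castM_mul_castM, transpose_sum,
    Matrix.sum_mul, Matrix.mul_sum, term_mul, Finset.sum_ite_eq', Finset.mem_univ, if_true]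
  rw [← kron_sum, sum_EE, kron_one_one, castM_one]

lemma isUnit_commMat (n m : ℕ) : IsUnit (commMat n m) :=
  .of_mul_eq_one _ (commMat_mul_transpose n m)

lemma marg_pred (N k : ℕ) (hk : 1 ≤ k) :
    Marg N k (k - 1) (k.sub_le 1) =
      castM (by rw [mul_one, pow_sub_one_mul (by omega)])
        (by rw [pow_sub_one_mul (by omega), pow_succ])
        (kron (kron (1 : Matrix (Fin (N ^ (k - 1))) (Fin (N ^ (k - 1))) ℝ) (onesRow N))
          (1 : Matrix (Fin N) (Fin N) ℝ)) := by
  have last_dim : N = N ^ (k - (k - 1)) := by rw [Nat.sub_sub_self hk, pow_one]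
  rw [Marg, ← castM_one last_dim, kron_castM, castM_castM]

lemma branch_self (N k : ℕ) (q : Fin (N ^ k) → Matrix (Fin N) (Fin 1) ℝ) :
    Branch N k k le_rfl q =
      castM (pow_succ N k).symm (mul_one _) (∑ i, kron (EE (N ^ k) i) (q i)) := by
  have last_dim : N ^ (k - k) = 1 := by rw [Nat.sub_self, pow_zero]
  have : Unique (Fin (N ^ (k - k))) := last_dim ▸ inferInstance
  simp only [Branch, Fintype.sum_unique, finCongr_pairIdx_of_eq_one last_dim,
    kron_EE_of_eq_one last_dim, ← castM_sum, castM_castM]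

theorem marg_pred_mul_branch_self (N k : ℕ) (hk : 1 ≤ k)
    (q : Fin (N ^ k) → Matrix (Fin N) (Fin 1) ℝ) :
    Marg N k (k - 1) (k.sub_le 1) * Branch N k k le_rfl q =
      ∑ i, castM (pow_sub_one_mul (by omega) N) (pow_sub_one_mul (by omega) N)
        (kron (EE (N ^ (k - 1)) i) (Qblk N k hk q i)) := by
  rw [marg_pred N k hk, branch_self, sum_EE_kron_of_mul_eq (pow_sub_one_mul (by omega) N),
    castM_castM, castM_mul_castM, kron_one_onesRow_one_mul_sum, castM_castM, castM_sum]
  rfl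

theorem stmt1_general (N k : ℕ) (hk : 1 ≤ k) (q : Fin (N ^ k) → Matrix (Fin N) (Fin 1) ℝ) :
    Marg N k (k - 1) (by omega) * Branch N k k le_rfl q =
      (∑ i : Fin (N ^ (k - 1)),
        castM (by rw [← pow_succ]; exact congrArg (N ^ ·) (by omega))
          (by rw [← pow_succ]; exact congrArg (N ^ ·) (by omega))
          (kron (EE (N ^ (k - 1)) i) (Qblk N k hk q i))) ∧
    (∑ i : Fin (N ^ (k - 1)),
        castM (by rw [← pow_succ]; exact congrArg (N ^ ·) (by omega))
          (by rw [← pow_succ]; exact congrArg (N ^ ·) (by omega))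
          (kron (EE (N ^ (k - 1)) i) (Qblk N k hk q i))) =
      (castM (by rw [← pow_succ']; exact congrArg (N ^ ·) (by omega))
          (by rw [← pow_succ']; exact congrArg (N ^ ·) (by omega))
          (commMat N (N ^ (k - 1))))⁻¹ * TransMat N k hk q := by
  refine ⟨marg_pred_mul_branch_self N k hk q, ?_⟩
  rw [TransMat, nonsing_inv_mul_cancel_left]
  exact (isUnit_iff_isUnit_det _).1 ((isUnit_castM_iff _ _).2 (isUnit_commMat _ _))

/-- `M^k_{k-1} B^k_k(𝒬) = ∑_i E_{N^{k-1},i} ⊗ Q_i = C_{N,N^{k-1}}⁻¹ Q^(k)`. -/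
theorem stmt1 (N k : ℕ) (hN : 1 ≤ N) (hk : 1 ≤ k)
    (q : Fin (N ^ k) → Matrix (Fin N) (Fin 1) ℝ) (hq : ∀ i, IsSimplex (q i)) :
    Marg N k (k - 1) (by omega) * Branch N k k le_rfl q =
      (∑ i : Fin (N ^ (k - 1)),
        castM (by rw [← pow_succ]; exact congrArg (N ^ ·) (by omega))
          (by rw [← pow_succ]; exact congrArg (N ^ ·) (by omega))
          (kron (EE (N ^ (k - 1)) i) (Qblk N k hk q i))) ∧
    (∑ i : Fin (N ^ (k - 1)),
        castM (by rw [← pow_succ]; exact congrArg (N ^ ·) (by omega))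
          (by rw [← pow_succ]; exact congrArg (N ^ ·) (by omega))
          (kron (EE (N ^ (k - 1)) i) (Qblk N k hk q i))) =
      (castM (by rw [← pow_succ']; exact congrArg (N ^ ·) (by omega))
          (by rw [← pow_succ']; exact congrArg (N ^ ·) (by omega))
          (commMat N (N ^ (k - 1))))⁻¹ * TransMat N k hk q :=
  stmt1_general N k hk q
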